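/- arXiv:2006.15744 — 3 statements merged into one kernel-verified Lean document; each statement's English description precedes it below -/
import Mathlib

section
/- Let E be a finite set, let F : 2^E → [0,1] be a set function, and let f be its multilinear extension. Then for every x ∈ [0,1]^E and every v ∈ ℝ^E with x + v ∈ [0,1]^E and ‖v‖₂ ≤ ρ for some ρ > 0, one has |f(x) − f(x+v)| ≤ 4·|E|^{1/4}·√ρ. -/
open Finset

/-- The multilinear extension of a set function `F : 2^E → ℝ`:
`f(x) = ∑_{S ⊆ E} F(S) ∏_{e ∈ S} x(e) ∏_{e ∉ S} (1 − x(e))`. -/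
noncomputable def multilinearExt {E : Type*} [Fintype E] [DecidableEq E]
    (F : Finset E → ℝ) (x : E → ℝ) : ℝ :=
  ∑ S : Finset E, F S * (∏ e ∈ S, x e) * ∏ e ∈ Sᶜ, (1 - x e)

/-!
Let `R(x)` be the random subset of `E` containing each `e` independently with probability `x e`, so
that `f(x)` is the expectation of `F(R(x))`. If the values of `F` differ by at most `c`, then so do
those of `f`. Since `f` is affine in each coordinate, with slope a difference of two values of `f`,
changing the coordinates one at a time shows that `f` is `c`-Lipschitz for the `ℓ¹` distance.
Interpolating, `|f(x) - f(y)| ≤ c * min 1 ‖x - y‖₁ ≤ c * √‖x - y‖₁`, and Cauchy-Schwarz bounds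
`‖x - y‖₁` by `√|E| * ‖x - y‖₂`.
-/

open Function

lemma sum_abs_le_sqrt_card_mul_sqrt_sum_sq {ι : Type*} (s : Finset ι) (v : ι → ℝ) :
    ∑ i ∈ s, |v i| ≤ √(#s : ℝ) * √(∑ i ∈ s, v i ^ 2) := by
  simpa using Real.sum_mul_le_sqrt_mul_sqrt s (fun _ ↦ 1) (fun i ↦ |v i|)

lemma sqrt_sqrt_mul_eq_rpow_mul_sqrt {a : ℝ} (ha : 0 ≤ a) (b : ℝ) :
    √(√a * b) = a ^ ((1 : ℝ) / 4) * √b := by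
  rw [Real.sqrt_mul (Real.sqrt_nonneg a), Real.sqrt_eq_rpow a, Real.sqrt_eq_rpow (a ^ _),
    ← Real.rpow_mul ha]
  norm_num

section SubsetWeight

variable {E : Type*} [Fintype E] [DecidableEq E]

/-- The probability that the random subset of `E` which contains each `e` independently with
probability `x e` equals `S`; these are the coefficients of the multilinear extension. -/
def subsetWeight (x : E → ℝ) (S : Finset E) : ℝ :=
  ∏ e, if e ∈ S then x e else 1 - x e

lemma subsetWeight_eq_prod_mul_prod_compl (x : E → ℝ) (S : Finset E) :
    subsetWeight x S = (∏ e ∈ S, x e) * ∏ e ∈ Sᶜ, (1 - x e) := by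
  rw [subsetWeight, prod_ite, filter_univ_mem, filter_not, filter_univ_mem,
    ← compl_eq_univ_sdiff]

lemma multilinearExt_eq_sum_subsetWeight (F : Finset E → ℝ) (x : E → ℝ) :
    multilinearExt F x = ∑ S, F S * subsetWeight x S := by
  simp only [multilinearExt, subsetWeight_eq_prod_mul_prod_compl, mul_assoc]

lemma subsetWeight_nonneg {x : E → ℝ} (hx : ∀ e, x e ∈ Set.Icc (0 : ℝ) 1) (S : Finset E) :
    0 ≤ subsetWeight x S := by
  refine prod_nonneg fun e _ ↦ ?_
  split_ifs
  exacts [(hx e).1, sub_nonneg.2 (hx e).2]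

lemma sum_subsetWeight (x : E → ℝ) : ∑ S, subsetWeight x S = 1 := by
  simp only [subsetWeight_eq_prod_mul_prod_compl, ← Fintype.prod_add, add_sub_cancel,
    prod_const_one]

lemma subsetWeight_update (x : E → ℝ) (e : E) (t : ℝ) (S : Finset E) :
    subsetWeight (update x e t) S =
      (1 - t) * subsetWeight (update x e 0) S + t * subsetWeight (update x e 1) S := by
  have split_factor (t : ℝ) : subsetWeight (update x e t) S =
      (if e ∈ S then t else 1 - t) * ∏ i ∈ {e}ᶜ, if i ∈ S then x i else 1 - x i := by
    rw [subsetWeight, Fintype.prod_eq_mul_prod_compl e, update_self]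
    congr 1
    refine prod_congr rfl fun i hi ↦ ?_
    rw [update_of_ne (by simpa using hi)]
  simp only [split_factor]
  split_ifs <;> ring

lemma multilinearExt_update (F : Finset E → ℝ) (x : E → ℝ) (e : E) (t : ℝ) :
    multilinearExt F (update x e t) =
      (1 - t) * multilinearExt F (update x e 0) + t * multilinearExt F (update x e 1) := by
  simp only [multilinearExt_eq_sum_subsetWeight, mul_sum, ← sum_add_distrib]
  refine sum_congr rfl fun S _ ↦ ?_
  rw [subsetWeight_update]
  ring

lemma abs_multilinearExt_sub_le {F : Finset E → ℝ} {a c : ℝ} (hF : ∀ S, |F S - a| ≤ c)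
    {x : E → ℝ} (hx : ∀ e, x e ∈ Set.Icc (0 : ℝ) 1) : |multilinearExt F x - a| ≤ c := by
  calc |multilinearExt F x - a| = |∑ S, (F S - a) * subsetWeight x S| := by
        simp only [multilinearExt_eq_sum_subsetWeight, sub_mul, sum_sub_distrib, ← mul_sum,
          sum_subsetWeight, mul_one]
    _ ≤ ∑ S, |F S - a| * subsetWeight x S := by
        refine (abs_sum_le_sum_abs _ _).trans_eq (sum_congr rfl fun S _ ↦ ?_)
        rw [abs_mul, abs_of_nonneg (subsetWeight_nonneg hx S)]
    _ ≤ ∑ S, c * subsetWeight x S :=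
        sum_le_sum fun S _ ↦ mul_le_mul_of_nonneg_right (hF S) (subsetWeight_nonneg hx S)
    _ = c := by rw [← mul_sum, sum_subsetWeight, mul_one]

end SubsetWeight

section Oscillation

variable {E : Type*} [Fintype E] [DecidableEq E] {F : Finset E → ℝ} {c : ℝ}
  (hF : ∀ S T, |F S - F T| ≤ c) {x y : E → ℝ} (hx : ∀ e, x e ∈ Set.Icc (0 : ℝ) 1)

include hF hx

lemma abs_multilinearExt_sub_multilinearExt_le (hy : ∀ e, y e ∈ Set.Icc (0 : ℝ) 1) :
    |multilinearExt F x - multilinearExt F y| ≤ c := by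
  refine abs_multilinearExt_sub_le (fun S ↦ ?_) hx
  rw [abs_sub_comm]
  exact abs_multilinearExt_sub_le (fun T ↦ hF T S) hy

lemma abs_multilinearExt_update_sub_update_le (e : E) (s t : ℝ) :
    |multilinearExt F (update x e s) - multilinearExt F (update x e t)| ≤ c * |s - t| := by
  have update_mem {r : ℝ} (hr : r ∈ Set.Icc (0 : ℝ) 1) (i : E) :
      update x e r i ∈ Set.Icc (0 : ℝ) 1 :=
    (forall_update_iff x fun _ z ↦ z ∈ Set.Icc (0 : ℝ) 1).2 ⟨hr, fun i _ ↦ hx i⟩ i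
  have slope_le :
      |multilinearExt F (update x e 1) - multilinearExt F (update x e 0)| ≤ c :=
    abs_multilinearExt_sub_multilinearExt_le hF (update_mem (by simp)) (update_mem (by simp))
  calc |multilinearExt F (update x e s) - multilinearExt F (update x e t)|
      = |(multilinearExt F (update x e 1) - multilinearExt F (update x e 0)) * (s - t)| := by
        rw [multilinearExt_update F x e s, multilinearExt_update F x e t]
        ring_nf
    _ ≤ c * |s - t| := by
        rw [abs_mul]
        gcongr

lemma abs_multilinearExt_sub_piecewise_le (hy : ∀ e, y e ∈ Set.Icc (0 : ℝ) 1) (s : Finset E) :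
    |multilinearExt F x - multilinearExt F (s.piecewise y x)| ≤ c * ∑ e ∈ s, |x e - y e| := by
  induction s using Finset.induction_on with
  | empty => simp
  | insert e s he ih =>
    set z := s.piecewise y x
    have hz (i : E) : z i ∈ Set.Icc (0 : ℝ) 1 :=
      s.piecewise_cases y x (· ∈ Set.Icc (0 : ℝ) 1) (hy i) (hx i)
    have update_z : update z e (x e) = z := by
      rw [← s.piecewise_eq_of_notMem y x he, update_eq_self]
    have change_e : |multilinearExt F z - multilinearExt F (update z e (y e))| ≤
        c * |x e - y e| := by
      simpa only [update_z] using abs_multilinearExt_update_sub_update_le hF hz e (x e) (y e)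
    rw [piecewise_insert, sum_insert he, mul_add, add_comm (c * |x e - y e|)]
    exact (abs_sub_le _ _ _).trans (add_le_add ih change_e)

lemma abs_multilinearExt_sub_le_mul_sum_abs (hy : ∀ e, y e ∈ Set.Icc (0 : ℝ) 1) :
    |multilinearExt F x - multilinearExt F y| ≤ c * ∑ e, |x e - y e| := by
  simpa only [piecewise_univ] using abs_multilinearExt_sub_piecewise_le hF hx hy univ

lemma abs_multilinearExt_sub_le_mul_sqrt_sum_abs (hy : ∀ e, y e ∈ Set.Icc (0 : ℝ) 1) :
    |multilinearExt F x - multilinearExt F y| ≤ c * √(∑ e, |x e - y e|) := by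
  have hc : 0 ≤ c := (abs_nonneg _).trans (hF ∅ ∅)
  rcases le_total (∑ e, |x e - y e|) 1 with h | h
  · refine (abs_multilinearExt_sub_le_mul_sum_abs hF hx hy).trans ?_
    gcongr
    exact Real.le_sqrt_self_iff.2 h
  · exact (abs_multilinearExt_sub_multilinearExt_le hF hx hy).trans
      (le_mul_of_one_le_right hc (Real.one_le_sqrt.2 h))

end Oscillation

theorem multilinearExt_dist_le_general {E : Type*} [Fintype E] [DecidableEq E]
    {F : Finset E → ℝ} {c : ℝ} (hF : ∀ S T, |F S - F T| ≤ c) {ρ : ℝ} {x v : E → ℝ}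
    (hx : ∀ e, x e ∈ Set.Icc (0 : ℝ) 1) (hxv : ∀ e, x e + v e ∈ Set.Icc (0 : ℝ) 1)
    (hv : √(∑ e, v e ^ 2) ≤ ρ) :
    |multilinearExt F x - multilinearExt F (fun e ↦ x e + v e)| ≤
      c * (Fintype.card E : ℝ) ^ ((1 : ℝ) / 4) * √ρ := by
  have hc : 0 ≤ c := (abs_nonneg _).trans (hF ∅ ∅)
  calc |multilinearExt F x - multilinearExt F (fun e ↦ x e + v e)|
      ≤ c * √(∑ e, |v e|) := by
        simpa using abs_multilinearExt_sub_le_mul_sqrt_sum_abs hF hx hxv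
    _ ≤ c * √(√(Fintype.card E : ℝ) * ρ) := by
        gcongr
        exact (sum_abs_le_sqrt_card_mul_sqrt_sum_sq univ v).trans (by rw [card_univ]; gcongr)
    _ = c * (Fintype.card E : ℝ) ^ ((1 : ℝ) / 4) * √ρ := by
        rw [sqrt_sqrt_mul_eq_rpow_mul_sqrt (Nat.cast_nonneg _), mul_assoc]

/-- For `F : 2^E → [0,1]` with multilinear extension `f`, for every `x ∈ [0,1]^E`
and `v` with `x + v ∈ [0,1]^E` and `‖v‖₂ ≤ ρ` (`ρ > 0`), one has
`|f(x) − f(x+v)| ≤ 4 |E|^{1/4} √ρ`. -/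
theorem multilinearExt_dist_le {E : Type*} [Fintype E] [DecidableEq E]
    (F : Finset E → ℝ) (hF : ∀ S, F S ∈ Set.Icc (0 : ℝ) 1)
    (ρ : ℝ) (hρ : 0 < ρ) (x v : E → ℝ)
    (hx : ∀ e, x e ∈ Set.Icc (0 : ℝ) 1)
    (hxv : ∀ e, x e + v e ∈ Set.Icc (0 : ℝ) 1)
    (hv : Real.sqrt (∑ e, v e ^ 2) ≤ ρ) :
    |multilinearExt F x - multilinearExt F (fun e => x e + v e)| ≤
      4 * (Fintype.card E : ℝ) ^ ((1 : ℝ) / 4) * Real.sqrt ρ :=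
  (multilinearExt_dist_le_general (fun S T ↦ Real.dist_le_of_mem_Icc_01 (hF S) (hF T))
    hx hxv hv).trans (by gcongr; norm_num)
end

section
/- Let E be a finite set and let F : 2^E → ℝ be a submodular set function with multilinear extension f. Then f is concave along any nonnegative direction: for every x ∈ [0,1]^E and every d ∈ ℝ^E with d ≥ 0, the function t ↦ f(x + t·d) is concave on the interval {t ≥ 0 : x + t·d ∈ [0,1]^E}. -/
open Finset

/-!
Induct on the ground set. Conditioning on an element `a` writes the extension as
`f = x a * f₁ + (1 - x a) * f₀`, where `f₁` and `f₀` are the extensions of `S ↦ F (insert a S)` and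
of `F` on the smaller ground set, both concave by induction. The concavity defect that the products
contribute along a segment from `x` to `y` is a nonnegative multiple of
`(x a - y a) * ((f₁ - f₀) x - (f₁ - f₀) y)`. Here `f₁ - f₀` extends the marginal
`S ↦ F (insert a S) - F S`, which is antitone by submodularity, so `f₁ - f₀` is antitone on the cube
and the product is nonpositive as soon as `x` and `y` are comparable.
-/

section Order

variable {ι α β : Type*} [Preorder ι] [Preorder α] [Preorder β] {s : Set ι} {f : ι → α} {g : ι → β}

theorem antivaryOn_of_isChain (hs : IsChain (· ≤ ·) s) (hf : MonotoneOn f s)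
    (hg : AntitoneOn g s) : AntivaryOn f g s := by
  intro x hx y hy hlt
  rcases hs.total hx hy with hxy | hyx
  · exact absurd (hg hx hy hxy) hlt.not_ge
  · exact hf hy hx hyx

end Order

section Convex

variable {𝕜 V : Type*} [CommRing 𝕜] [LinearOrder 𝕜] [IsStrictOrderedRing 𝕜]
  [AddCommGroup V] [Module 𝕜 V] {s : Set V} {f g : V → 𝕜}

theorem concaveOn_mul_add_one_sub_mul (u : V →ᵃ[𝕜] 𝕜) (hu : Set.MapsTo u s (Set.Icc 0 1))
    (hf : ConcaveOn 𝕜 s f) (hg : ConcaveOn 𝕜 s g) (hufg : AntivaryOn u (f - g) s) :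
    ConcaveOn 𝕜 s fun x => u x * f x + (1 - u x) * g x := by
  refine ⟨hf.1, fun x hx y hy p q hp hq hpq => ?_⟩
  have huz : u (p • x + q • y) = p * u x + q * u y := Convex.combo_affine_apply hpq
  obtain ⟨hz_nonneg, hz_le_one⟩ := hu (hf.1 hx hy hp hq hpq)
  have hdefect : p * q * ((f x - g x - (f y - g y)) * (u x - u y)) ≤ 0 :=
    mul_nonpos_of_nonneg_of_nonpos (mul_nonneg hp hq)
      (hufg.symm.sub_mul_sub_nonpos hy hx)
  calc p * (u x * f x + (1 - u x) * g x) + q * (u y * f y + (1 - u y) * g y)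
      = u (p • x + q • y) * (p * f x + q * f y)
          + (1 - u (p • x + q • y)) * (p * g x + q * g y)
          + p * q * ((f x - g x - (f y - g y)) * (u x - u y)) := by
        obtain rfl : p = 1 - q := eq_sub_of_add_eq hpq
        rw [huz]
        ring
    _ ≤ u (p • x + q • y) * (p * f x + q * f y)
          + (1 - u (p • x + q • y)) * (p * g x + q * g y) := add_le_of_nonpos_right hdefect
    _ ≤ u (p • x + q • y) * f (p • x + q • y)
          + (1 - u (p • x + q • y)) * g (p • x + q • y) :=
        add_le_add (mul_le_mul_of_nonneg_left (hf.2 hx hy hp hq hpq) hz_nonneg)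
          (mul_le_mul_of_nonneg_left (hg.2 hx hy hp hq hpq) (sub_nonneg.2 hz_le_one))

end Convex

section MultilinearExtOn

variable {E R : Type*} [DecidableEq E] [CommRing R] {A : Finset E} {a : E} {F G : Finset E → R}
  {x : E → R}

/-- The multilinear extension of the restriction of `F` to the subsets of `A`. It is kept as a
function on all of `E → R`, although only the coordinates in `A` matter, so that `A` can vary in an
induction. -/
def multilinearExtOn (A : Finset E) (F : Finset E → R) (x : E → R) : R :=
  ∑ S ∈ A.powerset, F S * (∏ e ∈ S, x e) * ∏ e ∈ A \ S, (1 - x e)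

theorem multilinearExtOn_univ [Fintype E] (F : Finset E → ℝ) :
    multilinearExtOn univ F = multilinearExt F := by
  ext x
  simp [multilinearExtOn, multilinearExt, compl_eq_univ_sdiff]

theorem multilinearExtOn_empty (F : Finset E → R) (x : E → R) :
    multilinearExtOn ∅ F x = F ∅ := by
  simp [multilinearExtOn]

theorem multilinearExtOn_insert (ha : a ∉ A) (F : Finset E → R) (x : E → R) :
    multilinearExtOn (insert a A) F x =
      x a * multilinearExtOn A (fun S => F (insert a S)) x
        + (1 - x a) * multilinearExtOn A F x := by
  unfold multilinearExtOn
  rw [sum_powerset_insert ha, add_comm, mul_sum, mul_sum]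
  congr 1 <;> refine sum_congr rfl fun S hS => ?_
  all_goals have haS : a ∉ S := fun h => ha (mem_powerset.1 hS h)
  · rw [insert_sdiff_insert, sdiff_insert_of_notMem ha, prod_insert haS]
    ring
  · rw [insert_sdiff_of_notMem _ haS, prod_insert (by simp [ha])]
    ring

theorem multilinearExtOn_sub (A : Finset E) (F G : Finset E → R) :
    multilinearExtOn A (F - G) = multilinearExtOn A F - multilinearExtOn A G := by
  ext x
  simp only [multilinearExtOn, Pi.sub_apply, sub_mul, sum_sub_distrib]

variable [PartialOrder R] [IsOrderedRing R]

theorem multilinearExtOn_le_multilinearExtOn (hx : x ∈ Set.Icc 0 1) (hFG : ∀ S ⊆ A, F S ≤ G S) :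
    multilinearExtOn A F x ≤ multilinearExtOn A G x := by
  refine sum_le_sum fun S hS => ?_
  have hin : 0 ≤ ∏ e ∈ S, x e := prod_nonneg fun e _ => hx.1 e
  have hout : 0 ≤ ∏ e ∈ A \ S, (1 - x e) := prod_nonneg fun e _ => sub_nonneg.2 (hx.2 e)
  have hS_le : F S ≤ G S := hFG S (mem_powerset.1 hS)
  gcongr

theorem antitoneOn_multilinearExtOn (hG : AntitoneOn G (Set.Iic A)) :
    AntitoneOn (multilinearExtOn A G) (Set.Icc 0 1) := by
  induction A using Finset.induction_on generalizing G with
  | empty => exact fun x _ y _ _ => by simp only [multilinearExtOn_empty, le_refl]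
  | insert a A ha ih =>
    intro x hx y hy hxy
    have hinsert : AntitoneOn (fun S => G (insert a S)) (Set.Iic A) := fun S hS T hT hST =>
      hG (insert_subset_insert a hS) (insert_subset_insert a hT) (insert_subset_insert a hST)
    have hself : AntitoneOn G (Set.Iic A) := hG.mono (Set.Iic_subset_Iic.2 (subset_insert a A))
    have hle : multilinearExtOn A (fun S => G (insert a S)) x ≤ multilinearExtOn A G x :=
      multilinearExtOn_le_multilinearExtOn hx fun S hS =>
        hG (hS.trans (subset_insert a A)) (insert_subset_insert a hS) (subset_insert a S)
    rw [multilinearExtOn_insert ha, multilinearExtOn_insert ha]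
    calc y a * multilinearExtOn A (fun S => G (insert a S)) y + (1 - y a) * multilinearExtOn A G y
        ≤ y a * multilinearExtOn A (fun S => G (insert a S)) x
            + (1 - y a) * multilinearExtOn A G x :=
          add_le_add (mul_le_mul_of_nonneg_left (ih hinsert hx hy hxy) (hy.1 a))
            (mul_le_mul_of_nonneg_left (ih hself hx hy hxy) (sub_nonneg.2 (hy.2 a)))
      _ = x a * multilinearExtOn A (fun S => G (insert a S)) x
            + (1 - x a) * multilinearExtOn A G x
            - (y a - x a)
              * (multilinearExtOn A G x - multilinearExtOn A (fun S => G (insert a S)) x) := by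
          ring
      _ ≤ x a * multilinearExtOn A (fun S => G (insert a S)) x
            + (1 - x a) * multilinearExtOn A G x :=
          sub_le_self _ (mul_nonneg (sub_nonneg.2 (hxy a)) (sub_nonneg.2 hle))

end MultilinearExtOn

section Submodular

variable {E R : Type*} [DecidableEq E] [AddGroup R] [Preorder R] {F : Finset E → R}

/-- Submodularity of a set function, in the form of diminishing marginal values. -/
def IsSubmodular (F : Finset E → R) : Prop :=
  ∀ S T : Finset E, S ⊆ T → ∀ e ∉ T, F (insert e T) - F T ≤ F (insert e S) - F S

theorem IsSubmodular.comp_insert (hF : IsSubmodular F) (a : E) :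
    IsSubmodular fun S => F (insert a S) := by
  intro S T hST e he
  obtain rfl | hea := eq_or_ne e a
  · simp
  · simpa only [insert_comm e a] using
      hF (insert a S) (insert a T) (insert_subset_insert a hST) e (by simp [hea, he])

theorem IsSubmodular.antitoneOn_marginal (hF : IsSubmodular F) {A : Finset E} {a : E}
    (ha : a ∉ A) : AntitoneOn ((fun S => F (insert a S)) - F) (Set.Iic A) :=
  fun S _ T hT hST => hF S T hST a (notMem_mono hT ha)

end Submodular

theorem IsSubmodular.concaveOn_multilinearExtOn {E 𝕜 : Type*} [DecidableEq E] [CommRing 𝕜]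
    [LinearOrder 𝕜] [IsStrictOrderedRing 𝕜] {F : Finset E → 𝕜} (hF : IsSubmodular F)
    (A : Finset E) {s : Set (E → 𝕜)} (hs : Convex 𝕜 s) (hchain : IsChain (· ≤ ·) s)
    (hcube : s ⊆ Set.Icc 0 1) : ConcaveOn 𝕜 s (multilinearExtOn A F) := by
  induction A using Finset.induction_on generalizing F with
  | empty => simpa only [funext (multilinearExtOn_empty F)] using concaveOn_const (F ∅) hs
  | insert a A ha ih =>
    have hanti : AntitoneOn
        (multilinearExtOn A (fun S => F (insert a S)) - multilinearExtOn A F) s := by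
      rw [← multilinearExtOn_sub]
      exact (antitoneOn_multilinearExtOn (hF.antitoneOn_marginal ha)).mono hcube
    have hvary := antivaryOn_of_isChain hchain ((Function.monotone_eval a).monotoneOn s) hanti
    rw [funext (multilinearExtOn_insert ha F)]
    exact concaveOn_mul_add_one_sub_mul (LinearMap.proj (R := 𝕜) (φ := fun _ => 𝕜) a).toAffineMap
      (fun x hx => ⟨(hcube hx).1 a, (hcube hx).2 a⟩) (ih (hF.comp_insert a)) (ih hF) hvary

theorem multilinearExt_concave_along_nonneg_dir_general {E : Type*} [Fintype E] [DecidableEq E]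
    {F : Finset E → ℝ} (hF : IsSubmodular F) (x : E → ℝ) {d : E → ℝ} (hd : 0 ≤ d) :
    ConcaveOn ℝ {t : ℝ | ∀ e, x e + t * d e ∈ Set.Icc (0 : ℝ) 1}
      (fun t => multilinearExt F (fun e => x e + t * d e)) := by
  let line : ℝ →ᵃ[ℝ] E → ℝ := AffineMap.lineMap x (x + d)
  have hline (t : ℝ) : line t = fun e => x e + t * d e := by
    ext e
    simp [line, AffineMap.lineMap_apply, add_comm]
  have hmono : Monotone line := fun t u htu e => by
    simpa only [hline] using add_le_add_right (mul_le_mul_of_nonneg_right htu (hd e)) (x e)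
  have hconvex : Convex ℝ (Set.range line) := by
    simpa only [Set.image_univ] using convex_univ.affine_image line
  have hconcave := (hF.concaveOn_multilinearExtOn univ (hconvex.inter (convex_Icc 0 1))
    (hmono.isChain_range.mono Set.inter_subset_left) Set.inter_subset_right).comp_affineMap line
  have hpreimage : {t : ℝ | ∀ e, x e + t * d e ∈ Set.Icc (0 : ℝ) 1} =
      line ⁻¹' (Set.range line ∩ Set.Icc 0 1) := by
    ext t
    simp [hline, Pi.le_def, forall_and]
  simpa only [hpreimage, multilinearExtOn_univ, Function.comp_def, hline] using hconcave

/-- If `F : 2^E → ℝ` is submodular, then its multilinear extension `f` is concave along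
any nonnegative direction: for `x ∈ [0,1]^E` and `d ≥ 0`, the map `t ↦ f(x + t·d)` is
concave on `{t ≥ 0 : x + t·d ∈ [0,1]^E}`. -/
theorem multilinearExt_concave_along_nonneg_dir {E : Type*} [Fintype E] [DecidableEq E]
    (F : Finset E → ℝ)
    (hsub : ∀ S T : Finset E, S ⊆ T → ∀ e ∉ T,
      F (insert e T) - F T ≤ F (insert e S) - F S)
    (x d : E → ℝ) (hx : ∀ e, x e ∈ Set.Icc (0 : ℝ) 1) (hd : ∀ e, 0 ≤ d e) :
    ConcaveOn ℝ {t : ℝ | 0 ≤ t ∧ ∀ e, x e + t * d e ∈ Set.Icc (0 : ℝ) 1}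
      (fun t => multilinearExt F (fun e => x e + t * d e)) :=
  have hline := multilinearExt_concave_along_nonneg_dir_general hsub x hd
  hline.subset (fun _ ht => ht.2) ((convex_Ici 0).inter hline.1)
end

section
/- Let R be a finite nonempty set, let ε, Δ > 0, and let q, q' : R → ℝ satisfy |q(r) − q'(r)| ≤ Δ for every r ∈ R. Let p and p' be the probability distributions on R assigning to each r probability proportional to exp((ε/(2Δ))·q(r)) and exp((ε/(2Δ))·q'(r)) respectively. Then for every r ∈ R, p(r) ≤ exp(ε)·p'(r). -/
open Finset

/-!
Put `f = (ε/(2Δ)) q` and `g = (ε/(2Δ)) q'`. Then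
`p(r) / p'(r) = e^(f r - g r) * ∑ e^(g s) / ∑ e^(f s)`, and the quotient of sums is at most
the largest of the ratios `e^(g s - f s)`. So privacy only costs the range of `f - g`, which is at
most twice its sup norm; this is the factor `2` in `ε/(2Δ)`.
-/

/-- The softmax (Gibbs) distribution of a score `f` on a finite type, as a real-valued mass
function: the exponential mechanism is the softmax of the rescaled quality score. -/
noncomputable def softmax {R : Type*} [Fintype R] (f : R → ℝ) (r : R) : ℝ :=
  Real.exp (f r) / ∑ s, Real.exp (f s)

theorem softmax_le_exp_mul_softmax {R : Type*} [Fintype R] {f g : R → ℝ} {ε : ℝ} {r : R}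
    (hrange : ∀ s, (f r - g r) - (f s - g s) ≤ ε) :
    softmax f r ≤ Real.exp ε * softmax g r := by
  have sum_exp_pos (h : R → ℝ) : 0 < ∑ s, Real.exp (h s) :=
    sum_pos (fun s _ => Real.exp_pos (h s)) ⟨r, mem_univ r⟩
  have termwise (s : R) :
      Real.exp (f r) * Real.exp (g s) ≤ Real.exp ε * Real.exp (g r) * Real.exp (f s) := by
    simp only [← Real.exp_add, Real.exp_le_exp]
    linarith [hrange s]
  rw [softmax, softmax, ← mul_div_assoc, div_le_div_iff₀ (sum_exp_pos f) (sum_exp_pos g),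
    mul_sum, mul_sum]
  exact sum_le_sum fun s _ => termwise s

theorem exponential_mechanism_privacy_general {R : Type*} [Fintype R] {ε Δ : ℝ}
    (hε : 0 ≤ ε) (hΔ : 0 < Δ) {q q' : R → ℝ} {r : R}
    (hrange : ∀ s, (q r - q' r) - (q s - q' s) ≤ 2 * Δ) :
    softmax (fun s => ε / (2 * Δ) * q s) r ≤
      Real.exp ε * softmax (fun s => ε / (2 * Δ) * q' s) r := by
  refine softmax_le_exp_mul_softmax fun s => ?_
  calc
    (ε / (2 * Δ) * q r - ε / (2 * Δ) * q' r) - (ε / (2 * Δ) * q s - ε / (2 * Δ) * q' s)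
      = ε / (2 * Δ) * ((q r - q' r) - (q s - q' s)) := by ring
    _ ≤ ε / (2 * Δ) * (2 * Δ) := by gcongr; exact hrange s
    _ = ε := div_mul_cancel₀ ε (by positivity)

/-- ε-differential privacy of the exponential mechanism: if two quality scores `q, q'` on a
finite nonempty set `R` differ pointwise by at most `Δ`, then the output distributions
(proportional to `exp((ε/(2Δ))·q(·))` resp. `exp((ε/(2Δ))·q'(·))`) satisfy
`p(r) ≤ e^ε · p'(r)` for every `r`. -/
theorem exponential_mechanism_privacy {R : Type*} [Fintype R] [Nonempty R]
    (ε Δ : ℝ) (hε : 0 < ε) (hΔ : 0 < Δ)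
    (q q' : R → ℝ) (hsens : ∀ r, |q r - q' r| ≤ Δ) (r : R) :
    Real.exp (ε / (2 * Δ) * q r) / (∑ r' : R, Real.exp (ε / (2 * Δ) * q r')) ≤
      Real.exp ε *
        (Real.exp (ε / (2 * Δ) * q' r) / ∑ r' : R, Real.exp (ε / (2 * Δ) * q' r')) :=
  exponential_mechanism_privacy_general hε.le hΔ fun s => by
    linarith [le_of_abs_le (hsens r), neg_le_of_abs_le (hsens s)]
end
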